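/- Let A ∈ M_d(ℂ) and suppose α is an extreme point of W(A) whose preimage under f_A contains two linearly independent unit vectors. Then there exists a sequence of matrices A_n → A and segments s_n, each s_n being a one-dimensional face (flat boundary portion) of W(A_n), such that s_n → {α} in the Hausdorff distance. -/

import Mathlib

open Matrix Complex

/-- Numerical range map `f_A(x) = x* A x`. -/
noncomputable def nrMap {d : ℕ} (A : Matrix (Fin d) (Fin d) ℂ) (x : Fin d → ℂ) : ℂ :=
  star x ⬝ᵥ A *ᵥ x

/-- Real part `Re(A) = (A + A*)/2`. -/
noncomputable def reP {d : ℕ} (A : Matrix (Fin d) (Fin d) ℂ) : Matrix (Fin d) (Fin d) ℂ :=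
  ((2:ℂ)⁻¹) • (A + Aᴴ)

/-- Imaginary part `Im(A) = (A - A*)/(2i)`. -/
noncomputable def imP {d : ℕ} (A : Matrix (Fin d) (Fin d) ℂ) : Matrix (Fin d) (Fin d) ℂ :=
  (((2:ℂ) * Complex.I)⁻¹) • (A - Aᴴ)

/-- `A(θ) = cos θ · Re(A) + sin θ · Im(A)`. -/
noncomputable def Ath {d : ℕ} (A : Matrix (Fin d) (Fin d) ℂ) (θ : ℝ) :
    Matrix (Fin d) (Fin d) ℂ :=
  Real.cos θ • reP A + Real.sin θ • imP A

/-- Numerical range `W(A)`. -/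
noncomputable def numRange {d : ℕ} (A : Matrix (Fin d) (Fin d) ℂ) : Set ℂ :=
  {z : ℂ | ∃ x : Fin d → ℂ, star x ⬝ᵥ x = 1 ∧ z = nrMap A x}

/-!
Extremality of `α` and the parallelogram identity make the vectors with `⟪x, T x⟫ = α ‖x‖²` a
subspace (Embry); multiple generation gives subspaces `0 < U < K` of it. By the Toeplitz–Hausdorff
theorem there is a supporting line of the numerical range at `α`. Add to `T` a small multiple of
`p P + q Q`, where `P` and `Q` are the orthogonal projections onto `Kᗮ` and `U`, the number `p`
points to the interior side of the line and `q ≠ 0` is parallel to it. Then only unit vectors of `K`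
still have their value on the line, and these values sweep out a short segment starting at `α`.
-/

open Filter Topology WithLp
open scoped InnerProductSpace

section Convexity

variable {F : Type*} [NormedAddCommGroup F] [NormedSpace ℝ F]

lemma exists_ne_zero_forall_le_of_notMem_interior [FiniteDimensional ℝ F] {s : Set F} {a : F}
    (hs : Convex ℝ s) (ha : a ∈ s) (hint : a ∉ interior s) :
    ∃ l : StrongDual ℝ F, l ≠ 0 ∧ ∀ b ∈ s, l b ≤ l a := by
  by_cases hne : (interior s).Nonempty
  · exact geometric_hahn_banach_of_nonempty_interior_point hs hint hne
  have hdir : (affineSpan ℝ s).direction < ⊤ := by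
    rw [lt_top_iff_ne_top, Ne,
      AffineSubspace.direction_eq_top_iff_of_nonempty ⟨a, subset_affineSpan ℝ s ha⟩]
    exact fun h => hne (hs.interior_nonempty_iff_affineSpan_eq_top.2 h)
  obtain ⟨l, hl, hker⟩ := Submodule.exists_le_ker_of_lt_top _ hdir
  refine ⟨l.toContinuousLinearMap, by simpa using hl, fun b hb => le_of_eq ?_⟩
  have hmem : b - a ∈ (affineSpan ℝ s).direction :=
    AffineSubspace.vsub_mem_direction (subset_affineSpan ℝ s hb) (subset_affineSpan ℝ s ha)
  simpa [sub_eq_zero] using hker hmem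

lemma hausdorffDist_segment_singleton_le (a b : F) :
    Metric.hausdorffDist (segment ℝ a b) {a} ≤ dist a b := by
  refine Metric.hausdorffDist_le_of_mem_dist dist_nonneg (fun c hc => ⟨a, rfl, ?_⟩) ?_
  · have := dist_add_dist_of_mem_segment hc
    rw [dist_comm c a]
    linarith [dist_nonneg (x := c) (y := b)]
  · rintro _ rfl
    exact ⟨_, left_mem_segment ℝ _ b, by simp⟩

end Convexity

variable {E : Type*} [NormedAddCommGroup E] [InnerProductSpace ℂ E]

/-- The numerical range of an operator on a complex inner product space, the coordinate-free
counterpart of `numRange`. -/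
def numericalRange (T : E →ₗ[ℂ] E) : Set ℂ :=
  {z | ∃ x : E, ‖x‖ = 1 ∧ ⟪x, T x⟫_ℂ = z}

section ToeplitzHausdorff

variable {T : E →ₗ[ℂ] E}

lemma inner_smul_map_smul_self (T : E →ₗ[ℂ] E) (c : ℂ) (v : E) :
    ⟪c • v, T (c • v)⟫_ℂ = ‖c‖ ^ 2 * ⟪v, T v⟫_ℂ := by
  rw [map_smul, inner_smul_left, inner_smul_right, ← mul_assoc, conj_mul']

lemma mem_numericalRange_iff_exists_ne_zero {z : ℂ} :
    z ∈ numericalRange T ↔ ∃ v ≠ 0, ⟪v, T v⟫_ℂ = z * ‖v‖ ^ 2 := by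
  constructor
  · rintro ⟨x, hx, rfl⟩
    exact ⟨x, norm_ne_zero_iff.1 (by simp [hx]), by simp [hx]⟩
  · rintro ⟨v, hv, hz⟩
    have hv' : (‖v‖ : ℂ) ≠ 0 := by simpa using hv
    refine ⟨(‖v‖⁻¹ : ℂ) • v, norm_smul_inv_norm hv, ?_⟩
    rw [inner_smul_map_smul_self, hz, norm_inv, norm_real, norm_norm, ofReal_inv]
    field_simp

lemma exists_norm_eq_one_im_inner_add_inner_eq_zero (T : E →ₗ[ℂ] E) (x y : E) :
    ∃ ω : ℂ, ‖ω‖ = 1 ∧ (⟪ω • x, T y⟫_ℂ + ⟪y, T (ω • x)⟫_ℂ).im = 0 := by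
  obtain ⟨ω, hω, h⟩ := Complex.exists_norm_eq_mul_self (⟪y, T x⟫_ℂ - ⟪T y, x⟫_ℂ)
  refine ⟨ω, hω, ?_⟩
  have him := congrArg Complex.im h
  rw [← inner_conj_symm (ω • x), map_smul, inner_smul_right, inner_smul_right, add_im, conj_im]
  rw [mul_sub, sub_im, ofReal_im] at him
  linarith

lemma linearIndependent_pair_of_inner_map_self {x y : E} (hx : x ≠ 0) (hTx : ⟪x, T x⟫_ℂ = 0)
    (hTy : ⟪y, T y⟫_ℂ ≠ 0) : LinearIndependent ℂ ![x, y] := by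
  refine (LinearIndependent.pair_iff' hx).2 fun a ha => hTy ?_
  rw [← ha, inner_smul_map_smul_self, hTx, mul_zero]

lemma ofReal_mem_numericalRange_of_im_eq_zero {x y : E} {t : ℝ} (hx : ‖x‖ = 1) (hy : ‖y‖ = 1)
    (hTx : ⟪x, T x⟫_ℂ = 0) (hTy : ⟪y, T y⟫_ℂ = 1) (hreal : (⟪x, T y⟫_ℂ + ⟪y, T x⟫_ℂ).im = 0)
    (ht : t ∈ Set.Icc (0 : ℝ) 1) : (t : ℂ) ∈ numericalRange T := by
  let v : ℝ → E := fun s => ((1 - s : ℝ) : ℂ) • x + (s : ℂ) • y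
  have hform (s : ℝ) : ⟪v s, T (v s)⟫_ℂ =
      ((s ^ 2 : ℝ) : ℂ) + ((1 - s) * s : ℝ) * (⟪x, T y⟫_ℂ + ⟪y, T x⟫_ℂ) := by
    simp only [v, map_add, map_smul, inner_add_left, inner_add_right, inner_smul_left,
      inner_smul_right, conj_ofReal, hTx, hTy]
    push_cast
    ring
  have him (s : ℝ) : (⟪v s, T (v s)⟫_ℂ).im = 0 := by
    rw [hform, add_im, ofReal_im, im_ofReal_mul, hreal, mul_zero, add_zero]
  have hv (s : ℝ) : v s ≠ 0 := by
    have hxy : LinearIndependent ℂ ![x, y] :=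
      linearIndependent_pair_of_inner_map_self (norm_ne_zero_iff.1 (by simp [hx])) hTx
        (by simp [hTy])
    intro h
    obtain ⟨h₁, h₂⟩ := LinearIndependent.pair_iff.1 hxy _ _ h
    rw [ofReal_eq_zero] at h₁ h₂
    linarith
  let g : ℝ → ℝ := fun s => (⟪v s, T (v s)⟫_ℂ).re - t * ‖v s‖ ^ 2
  have hg : Continuous g := by
    simp only [g, hform]
    fun_prop
  obtain ⟨s, -, hs⟩ : 0 ∈ g '' Set.Icc 0 1 :=
    intermediate_value_Icc zero_le_one hg.continuousOn
      ⟨by simpa [g, v, hTx, hx] using ht.1, by simpa [g, v, hTy, hy] using ht.2⟩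
  refine mem_numericalRange_iff_exists_ne_zero.2 ⟨v s, hv s, Complex.ext ?_ ?_⟩
  · simpa [← ofReal_pow, g, sub_eq_zero] using hs
  · simpa [← ofReal_pow] using him s

lemma ofReal_mem_numericalRange {t : ℝ} (h₀ : 0 ∈ numericalRange T) (h₁ : 1 ∈ numericalRange T)
    (ht : t ∈ Set.Icc (0 : ℝ) 1) : (t : ℂ) ∈ numericalRange T := by
  obtain ⟨x, hx, hTx⟩ := h₀
  obtain ⟨y, hy, hTy⟩ := h₁
  -- After rotating `x`, the values along the line from `x` to `y` are real: a path from `0` to `1`.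
  obtain ⟨ω, hω, hreal⟩ := exists_norm_eq_one_im_inner_add_inner_eq_zero T x y
  have hωx : ‖ω • x‖ = 1 := by rw [norm_smul, hω, hx, one_mul]
  have hTωx : ⟪ω • x, T (ω • x)⟫_ℂ = 0 := by rw [inner_smul_map_smul_self, hTx, mul_zero]
  exact ofReal_mem_numericalRange_of_im_eq_zero hωx hy hTωx hTy hreal ht

theorem convex_numericalRange (T : E →ₗ[ℂ] E) : Convex ℝ (numericalRange T) := by
  refine convex_iff_segment_subset.2 fun p hp q hq => ?_
  rcases eq_or_ne p q with rfl | hpq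
  · simpa using hp
  have hqp : q - p ≠ 0 := sub_ne_zero.2 hpq.symm
  let S : E →ₗ[ℂ] E := (q - p)⁻¹ • (T - p • LinearMap.id)
  have hS (w : ℂ) : w ∈ numericalRange S ↔ p + w * (q - p) ∈ numericalRange T := by
    simp only [mem_numericalRange_iff_exists_ne_zero, S, LinearMap.smul_apply, LinearMap.sub_apply,
      LinearMap.id_apply, inner_smul_right, inner_sub_right, inner_self_eq_norm_sq_to_K]
    refine exists_congr fun v => and_congr_right fun _ => ?_
    rw [inv_mul_eq_iff_eq_mul₀ hqp, sub_eq_iff_eq_add]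
    exact iff_of_eq (congrArg _ (by simp only [coe_algebraMap]; ring))
  rw [segment_eq_image']
  rintro _ ⟨t, ht, rfl⟩
  have := ofReal_mem_numericalRange ((hS 0).2 (by simpa)) ((hS 1).2 (by simpa)) ht
  simpa using (hS t).1 this

end ToeplitzHausdorff

section MultiplyGenerated

variable {T : E →ₗ[ℂ] E} {α : ℂ}

/-- `α` is multiply generated by `T` when its preimage under `x ↦ ⟪x, T x⟫` on the unit sphere
contains two linearly independent vectors. -/
def IsMultiplyGenerated (T : E →ₗ[ℂ] E) (α : ℂ) : Prop :=
  ∃ x y : E, ‖x‖ = 1 ∧ ‖y‖ = 1 ∧ ⟪x, T x⟫_ℂ = α ∧ ⟪y, T y⟫_ℂ = α ∧ LinearIndependent ℂ ![x, y]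

lemma mem_openSegment_div_div {α z w : ℂ} {a b : ℝ} (ha : 0 < a) (hb : 0 < b)
    (h : z + w = α * (a + b)) : α ∈ openSegment ℝ (z / a) (w / b) := by
  have ha' : (a : ℂ) ≠ 0 := mod_cast ha.ne'
  have hb' : (b : ℂ) ≠ 0 := mod_cast hb.ne'
  have hab : (a + b : ℂ) ≠ 0 := mod_cast (add_pos ha hb).ne'
  refine ⟨a / (a + b), b / (a + b), by positivity, by positivity, by field_simp, ?_⟩
  rw [real_smul, real_smul, ofReal_div, ofReal_div, ofReal_add]
  field_simp
  rw [h, mul_comm]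

lemma inner_map_self_eq_of_add_eq (hα : α ∈ (numericalRange T).extremePoints ℝ) {v w : E}
    (h : ⟪v, T v⟫_ℂ + ⟪w, T w⟫_ℂ = α * (‖v‖ ^ 2 + ‖w‖ ^ 2)) :
    ⟪v, T v⟫_ℂ = α * ‖v‖ ^ 2 := by
  rcases eq_or_ne v 0 with rfl | hv
  · simp
  rcases eq_or_ne w 0 with rfl | hw
  · simpa using h
  have hmem {u : E} (hu : u ≠ 0) : ⟪u, T u⟫_ℂ / ((‖u‖ ^ 2 : ℝ) : ℂ) ∈ numericalRange T :=
    mem_numericalRange_iff_exists_ne_zero.2 ⟨u, hu, by simp [hu]⟩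
  have hseg := mem_openSegment_div_div (pow_pos (norm_pos_iff.2 hv) 2)
    (pow_pos (norm_pos_iff.2 hw) 2) (by simpa using h)
  have hvα := hα.2 (hmem hv) (hmem hw) hseg
  rwa [div_eq_iff (by simpa using hv), ofReal_pow] at hvα

lemma inner_map_add_self_of_mem_extremePoints (hα : α ∈ (numericalRange T).extremePoints ℝ)
    {x y : E} (hx : ⟪x, T x⟫_ℂ = α * ‖x‖ ^ 2) (hy : ⟪y, T y⟫_ℂ = α * ‖y‖ ^ 2) :
    ⟪x + y, T (x + y)⟫_ℂ = α * ‖x + y‖ ^ 2 := by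
  refine inner_map_self_eq_of_add_eq hα (w := x - y) ?_
  have hnorm : (‖x + y‖ ^ 2 + ‖x - y‖ ^ 2 : ℂ) = 2 * (‖x‖ ^ 2 + ‖y‖ ^ 2) :=
    mod_cast parallelogram_law_with_norm ℂ x y
  simp only [hnorm, map_add, map_sub, inner_add_left, inner_add_right, inner_sub_left,
    inner_sub_right]
  linear_combination 2 * hx + 2 * hy

/-- Embry's subspace of an extreme point `α`: the cone over the unit vectors that generate `α`,
which extremality makes linear. -/
def embrySubspace (hα : α ∈ (numericalRange T).extremePoints ℝ) : Submodule ℂ E where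
  carrier := {v | ⟪v, T v⟫_ℂ = α * ‖v‖ ^ 2}
  zero_mem' := by simp
  add_mem' := inner_map_add_self_of_mem_extremePoints hα
  smul_mem' c v (hv : ⟪v, T v⟫_ℂ = α * ‖v‖ ^ 2) := by
    change ⟪c • v, T (c • v)⟫_ℂ = α * ‖c • v‖ ^ 2
    rw [inner_smul_map_smul_self, hv, norm_smul, ofReal_mul]
    ring

lemma mem_embrySubspace_of_norm_eq_one (hα : α ∈ (numericalRange T).extremePoints ℝ) {x : E}
    (hx : ‖x‖ = 1) (h : ⟪x, T x⟫_ℂ = α) : x ∈ embrySubspace hα := by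
  change ⟪x, T x⟫_ℂ = α * ‖x‖ ^ 2
  rw [h, hx]
  simp

lemma IsMultiplyGenerated.exists_lt_le_embrySubspace (hgen : IsMultiplyGenerated T α)
    (hα : α ∈ (numericalRange T).extremePoints ℝ) :
    ∃ U K : Submodule ℂ E, FiniteDimensional ℂ K ∧ U ≠ ⊥ ∧ U < K ∧ K ≤ embrySubspace hα := by
  obtain ⟨x, y, hx, hy, hTx, hTy, hxy⟩ := hgen
  refine ⟨ℂ ∙ x, Submodule.span ℂ {x, y}, .span_of_finite ℂ (Set.toFinite _), ?_, ?_, ?_⟩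
  · simpa using hxy.ne_zero 0
  · refine lt_of_le_not_ge (Submodule.span_mono (by simp)) fun h => ?_
    obtain ⟨c, hc⟩ := Submodule.mem_span_singleton.1 (h (Submodule.subset_span (by simp : y ∈ _)))
    simpa using (LinearIndependent.pair_iff.1 hxy c (-1) (by simp [hc])).2
  · rw [Submodule.span_le, Set.pair_subset_iff]
    exact ⟨mem_embrySubspace_of_norm_eq_one hα hx hTx, mem_embrySubspace_of_norm_eq_one hα hy hTy⟩

end MultiplyGenerated

section Perturbation

lemma inner_starProjection_self (K : Submodule ℂ E) [K.HasOrthogonalProjection] (v : E) :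
    ⟪v, K.starProjection v⟫_ℂ = ‖K.starProjection v‖ ^ 2 := by
  rw [← coe_algebraMap, ← inner_self_eq_norm_sq_to_K (𝕜 := ℂ),
    K.inner_starProjection_left_eq_right,
    K.starProjection_eq_self_iff.2 (K.starProjection_apply_mem v)]

variable {T : E →ₗ[ℂ] E} {α : ℂ} {l : StrongDual ℝ ℂ} {K U : Submodule ℂ E}
  [K.HasOrthogonalProjection] [U.HasOrthogonalProjection] {p q : ℂ}

/-- The perturbing operator: `p` moves the values at vectors outside `K` off the supporting line
at `α`, while `q` spreads those at vectors of `U ≤ K` along it. -/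
noncomputable def tilt (K U : Submodule ℂ E) [K.HasOrthogonalProjection]
    [U.HasOrthogonalProjection] (p q : ℂ) : E →L[ℂ] E :=
  p • Kᗮ.starProjection + q • U.starProjection

lemma smul_tilt (ε : ℝ) : ε • tilt K U p q = tilt K U (ε • p) (ε • q) := by
  rw [tilt, tilt, smul_add, smul_assoc, smul_assoc]

lemma inner_add_tilt_self (T : E →ₗ[ℂ] E) (v : E) :
    ⟪v, (T + (tilt K U p q).toLinearMap) v⟫_ℂ =
      ⟪v, T v⟫_ℂ + ‖Kᗮ.starProjection v‖ ^ 2 * p + ‖U.starProjection v‖ ^ 2 * q := by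
  simp only [tilt, LinearMap.add_apply, ContinuousLinearMap.coe_coe, _root_.add_apply,
    _root_.smul_apply, inner_add_right, inner_smul_right, inner_starProjection_self]
  ring

lemma inner_add_tilt_self_of_mem (hK : ∀ v ∈ K, ⟪v, T v⟫_ℂ = α * ‖v‖ ^ 2) {v : E} (hv : v ∈ K) :
    ⟪v, (T + (tilt K U p q).toLinearMap) v⟫_ℂ = α * ‖v‖ ^ 2 + ‖U.starProjection v‖ ^ 2 * q := by
  rw [inner_add_tilt_self, hK v hv, Kᗮ.starProjection_apply_eq_zero_iff.2
    (K.le_orthogonal_orthogonal hv)]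
  simp

lemma segment_subset_numericalRange_add_tilt (hK : ∀ v ∈ K, ⟪v, T v⟫_ℂ = α * ‖v‖ ^ 2)
    (hU : U ≠ ⊥) (hUK : U < K) :
    segment ℝ α (α + q) ⊆ numericalRange (T + (tilt K U p q).toLinearMap) := by
  refine (convex_numericalRange _).segment_subset ?_ ?_ <;>
    rw [mem_numericalRange_iff_exists_ne_zero]
  · have hne : Uᗮ ⊓ K ≠ ⊥ := fun h => hUK.ne <| by
      simpa [h] using U.sup_orthogonal_inf_of_hasOrthogonalProjection hUK.le
    obtain ⟨w, ⟨hwU, hwK⟩, hw⟩ := Submodule.exists_mem_ne_zero_of_ne_bot hne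
    refine ⟨w, hw, ?_⟩
    rw [inner_add_tilt_self_of_mem hK hwK, U.starProjection_apply_eq_zero_iff.2 hwU]
    simp
  · obtain ⟨u, huU, hu⟩ := Submodule.exists_mem_ne_zero_of_ne_bot hU
    refine ⟨u, hu, ?_⟩
    rw [inner_add_tilt_self_of_mem hK (hUK.le huU), U.starProjection_eq_self_iff.2 huU]
    ring

lemma inner_add_tilt_self_mem_segment (hK : ∀ v ∈ K, ⟪v, T v⟫_ℂ = α * ‖v‖ ^ 2) {v : E} (hvK : v ∈ K)
    (hv : ‖v‖ = 1) : ⟪v, (T + (tilt K U p q).toLinearMap) v⟫_ℂ ∈ segment ℝ α (α + q) := by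
  have hle : ‖U.starProjection v‖ ≤ 1 := (U.norm_starProjection_apply_le v).trans_eq hv
  rw [inner_add_tilt_self_of_mem hK hvK, hv, segment_eq_image']
  exact ⟨‖U.starProjection v‖ ^ 2, ⟨by positivity, pow_le_one₀ (norm_nonneg _) hle⟩, by simp⟩

theorem isExposed_segment_numericalRange_add_tilt (hl : ∀ z ∈ numericalRange T, l z ≤ l α)
    (hK : ∀ v ∈ K, ⟪v, T v⟫_ℂ = α * ‖v‖ ^ 2) (hU : U ≠ ⊥) (hUK : U < K) (hp : l p < 0)
    (hq : l q = 0) :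
    IsExposed ℝ (numericalRange (T + (tilt K U p q).toLinearMap)) (segment ℝ α (α + q)) := by
  have hval (v : E) : l ⟪v, (T + (tilt K U p q).toLinearMap) v⟫_ℂ =
      l ⟪v, T v⟫_ℂ + ‖Kᗮ.starProjection v‖ ^ 2 * l p := by
    rw [inner_add_tilt_self, ← ofReal_pow, ← ofReal_pow, ← real_smul, ← real_smul, map_add, map_add,
      map_smul, map_smul, hq, smul_zero, add_zero, smul_eq_mul]
  have hle : ∀ z ∈ numericalRange (T + (tilt K U p q).toLinearMap), l z ≤ l α := by
    rintro _ ⟨v, hv, rfl⟩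
    nlinarith [hval v, hl _ ⟨v, hv, rfl⟩, sq_nonneg ‖Kᗮ.starProjection v‖]
  have hseg : ∀ z ∈ segment ℝ α (α + q), l z = l α := by
    rw [segment_eq_image']
    rintro _ ⟨t, -, rfl⟩
    simp [hq, -real_smul]
  have hsub := segment_subset_numericalRange_add_tilt (p := p) (q := q) hK hU hUK
  refine fun _ => ⟨l, Set.Subset.antisymm (fun z hz => ⟨hsub hz, fun y hy => ?_⟩) ?_⟩
  · rw [hseg z hz]
    exact hle y hy
  · rintro _ ⟨⟨v, hv, rfl⟩, hmax⟩
    have hge : l α ≤ l ⟪v, (T + (tilt K U p q).toLinearMap) v⟫_ℂ :=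
      hmax α (hsub (left_mem_segment ℝ _ _))
    have hproj : ‖Kᗮ.starProjection v‖ ^ 2 = 0 := by
      nlinarith [hval v, hl _ ⟨v, hv, rfl⟩, sq_nonneg ‖Kᗮ.starProjection v‖]
    have hvK : v ∈ K := by
      rwa [sq_eq_zero_iff, norm_eq_zero, Submodule.starProjection_apply_eq_zero_iff,
        K.orthogonal_orthogonal] at hproj
    exact inner_add_tilt_self_mem_segment hK hvK hv

theorem exists_forall_isExposed_segment (hα : α ∈ (numericalRange T).extremePoints ℝ)
    (hgen : IsMultiplyGenerated T α) :
    ∃ (B : E →L[ℂ] E) (q : ℂ), q ≠ 0 ∧ ∀ ε : ℝ, 0 < ε →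
      IsExposed ℝ (numericalRange (T + (ε • B).toLinearMap)) (segment ℝ α (α + ε • q)) := by
  obtain ⟨l, hl₀, hl⟩ := exists_ne_zero_forall_le_of_notMem_interior (convex_numericalRange T) hα.1
    (Set.disjoint_right.1 (disjoint_interior_extremePoints _) hα)
  obtain ⟨p, hp⟩ := LinearMap.surjective (f := l.toLinearMap)
    (fun h => hl₀ (ContinuousLinearMap.coe_injective h)) (-1)
  obtain ⟨q, hq, hq₀⟩ := Submodule.exists_mem_ne_zero_of_ne_bot
    (l.toLinearMap.ker_ne_bot_of_finrank_lt (by simp))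
  obtain ⟨U, K, _, hU, hUK, hK⟩ := hgen.exists_lt_le_embrySubspace hα
  have : FiniteDimensional ℂ U := Submodule.finiteDimensional_of_le hUK.le
  refine ⟨tilt K U p q, q, hq₀, fun ε hε => ?_⟩
  have hlp : l (ε • p) < 0 := by
    rw [map_smul, show l p = -1 from hp]
    simpa using hε
  have hlq : l (ε • q) = 0 := by rw [map_smul, show l q = 0 from hq, smul_zero]
  rw [smul_tilt]
  exact isExposed_segment_numericalRange_add_tilt hl (fun v hv => hK hv) hU hUK hlp hlq

end Perturbation

theorem stmt13_general (T : E →L[ℂ] E) {α : ℂ}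
    (hα : α ∈ (numericalRange T.toLinearMap).extremePoints ℝ)
    (hgen : IsMultiplyGenerated T.toLinearMap α) :
    ∃ (Tseq : ℕ → E →L[ℂ] E) (s : ℕ → Set ℂ), Tendsto Tseq atTop (𝓝 T) ∧
      (∀ n, IsExtreme ℝ (numericalRange (Tseq n).toLinearMap) (s n) ∧
        ∃ p q : ℂ, p ≠ q ∧ s n = segment ℝ p q) ∧
      Tendsto (fun n => Metric.hausdorffDist (s n) {α}) atTop (𝓝 0) := by
  obtain ⟨B, q, hq, hface⟩ := exists_forall_isExposed_segment hα hgen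
  let ε : ℕ → ℝ := fun n => 1 / (n + 1)
  have hε (n : ℕ) : 0 < ε n := Nat.one_div_pos_of_nat
  have hlim : Tendsto ε atTop (𝓝 0) := tendsto_one_div_add_atTop_nhds_zero_nat
  refine ⟨fun n => T + ε n • B, fun n => segment ℝ α (α + ε n • q), ?_,
    fun n => ⟨(hface _ (hε n)).isExtreme, α, _, by simp [hq, (hε n).ne'], rfl⟩, ?_⟩
  · simpa using (hlim.smul_const B).const_add T
  · refine squeeze_zero (fun _ => Metric.hausdorffDist_nonneg)
      (fun _ => hausdorffDist_segment_singleton_le _ _) ?_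
    simpa using hlim.norm.mul_const ‖q‖

section Matrix

variable {d : ℕ} (A : Matrix (Fin d) (Fin d) ℂ)

lemma inner_toLp_toEuclideanCLM_toLp (x : Fin d → ℂ) :
    ⟪toLp 2 x, toEuclideanCLM (𝕜 := ℂ) A (toLp 2 x)⟫_ℂ = nrMap A x := by
  rw [toEuclideanCLM_toLp, EuclideanSpace.inner_toLp_toLp, dotProduct_comm, nrMap]

lemma norm_toLp_eq_one_iff (x : Fin d → ℂ) : ‖toLp 2 x‖ = 1 ↔ star x ⬝ᵥ x = 1 := by
  rw [dotProduct_comm, ← EuclideanSpace.inner_toLp_toLp, inner_self_eq_norm_sq_to_K,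
    RCLike.ofReal_eq_complex_ofReal, ← ofReal_pow, ofReal_eq_one,
    pow_eq_one_iff_of_nonneg (norm_nonneg (toLp 2 x)) two_ne_zero]

lemma numericalRange_toEuclideanCLM :
    numericalRange (toEuclideanCLM (𝕜 := ℂ) A).toLinearMap = numRange A := by
  ext z
  simp only [numericalRange, numRange, Set.mem_ofPred_eq, ContinuousLinearMap.coe_coe,
    (toLp_surjective 2).exists, norm_toLp_eq_one_iff, inner_toLp_toEuclideanCLM_toLp,
    eq_comm (a := z)]

lemma isMultiplyGenerated_toEuclideanCLM_iff {α : ℂ} :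
    IsMultiplyGenerated (toEuclideanCLM (𝕜 := ℂ) A).toLinearMap α ↔
      ∃ x y : Fin d → ℂ, star x ⬝ᵥ x = 1 ∧ star y ⬝ᵥ y = 1 ∧
        nrMap A x = α ∧ nrMap A y = α ∧ LinearIndependent ℂ ![x, y] := by
  have hli (x y : Fin d → ℂ) :
      LinearIndependent ℂ ![toLp 2 x, toLp 2 y] ↔ LinearIndependent ℂ ![x, y] := by
    simp only [LinearIndependent.pair_iff, ← toLp_smul, ← toLp_add, toLp_eq_zero]
  simp only [IsMultiplyGenerated, (toLp_surjective 2).exists, norm_toLp_eq_one_iff,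
    ContinuousLinearMap.coe_coe, inner_toLp_toEuclideanCLM_toLp, hli]

lemma continuous_toEuclideanCLM_symm :
    Continuous (toEuclideanCLM (n := Fin d) (𝕜 := ℂ)).symm :=
  LinearMap.continuous_of_finiteDimensional
    (toEuclideanCLM (n := Fin d) (𝕜 := ℂ)).symm.toAlgEquiv.toLinearMap

end Matrix

theorem stmt13 {d : ℕ} (A : Matrix (Fin d) (Fin d) ℂ) (α : ℂ)
    (hext : α ∈ Set.extremePoints ℝ (numRange A))
    (hmg : ∃ x y : Fin d → ℂ, star x ⬝ᵥ x = 1 ∧ star y ⬝ᵥ y = 1 ∧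
      nrMap A x = α ∧ nrMap A y = α ∧ LinearIndependent ℂ ![x, y]) :
    ∃ (Aseq : ℕ → Matrix (Fin d) (Fin d) ℂ) (s : ℕ → Set ℂ),
      Filter.Tendsto Aseq Filter.atTop (nhds A) ∧
      (∀ n, IsExtreme ℝ (numRange (Aseq n)) (s n) ∧
        ∃ p q : ℂ, p ≠ q ∧ s n = segment ℝ p q) ∧
      Filter.Tendsto (fun n => Metric.hausdorffDist (s n) {α}) Filter.atTop (nhds 0) := by
  obtain ⟨Tseq, s, hT, hs, hlim⟩ := stmt13_general (toEuclideanCLM (𝕜 := ℂ) A)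
    (by rwa [numericalRange_toEuclideanCLM]) ((isMultiplyGenerated_toEuclideanCLM_iff A).2 hmg)
  exact ⟨fun n => (toEuclideanCLM (𝕜 := ℂ)).symm (Tseq n), s,
    (continuous_toEuclideanCLM_symm.tendsto' _ _ (by simp)).comp hT,
    fun n => by simpa [← numericalRange_toEuclideanCLM] using hs n, hlim⟩
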